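/- arXiv:2107.02272 — 3 statements merged into one kernel-verified Lean document; each statement's English description precedes it below -/
import Mathlib

section
/- Let R be a commutative ring, x, y ∈ R, and M an R-module. Then the second Čech local cohomology group H²_{(x,y)}(M), i.e. the cokernel of the map M_x ⊕ M_y → M_{xy} given by (a,b) ↦ b − a (images under the canonical localization maps), is isomorphic as an R-module to (M/y^∞)/x^∞, the cokernel of the localization map K → K_x, where K = M/y^∞ is the cokernel of the localization map M → M_y. -/
noncomputable section

variable {R : Type*} [CommRing R]

/-- The localization of `M` away from `x`. -/
abbrev Loc (x : R) (M : Type*) [AddCommGroup M] [Module R M] :=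
  LocalizedModule (Submonoid.powers x) M

/-- The canonical localization map `M → M_x`. -/
abbrev locMap (x : R) (M : Type*) [AddCommGroup M] [Module R M] : M →ₗ[R] Loc x M :=
  LocalizedModule.mkLinearMap (Submonoid.powers x) M

/-- The cokernel `M/x^∞` of the localization map `M → M_x`. -/
abbrev CokLoc (x : R) (M : Type*) [AddCommGroup M] [Module R M] :=
  Loc x M ⧸ LinearMap.range (locMap x M)

lemma isUnit_left (x y : R) (M : Type*) [AddCommGroup M] [Module R M] :
    ∀ s : Submonoid.powers x,
      IsUnit ((algebraMap R (Module.End R (Loc (x * y) M))) s) := by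
  rintro ⟨s, n, rfl⟩
  have h : IsUnit ((algebraMap R (Module.End R (Loc (x * y) M))) (x * y)) :=
    IsLocalizedModule.map_units (locMap (x * y) M) ⟨x * y, Submonoid.mem_powers _⟩
  rw [map_mul] at h
  have hx := (((Commute.all x y).map
    (algebraMap R (Module.End R (Loc (x * y) M)))).isUnit_mul_iff.mp h).1
  simpa [map_pow] using hx.pow n

lemma isUnit_right (x y : R) (M : Type*) [AddCommGroup M] [Module R M] :
    ∀ s : Submonoid.powers y,
      IsUnit ((algebraMap R (Module.End R (Loc (x * y) M))) s) := by
  rintro ⟨s, n, rfl⟩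
  have h : IsUnit ((algebraMap R (Module.End R (Loc (x * y) M))) (x * y)) :=
    IsLocalizedModule.map_units (locMap (x * y) M) ⟨x * y, Submonoid.mem_powers _⟩
  rw [map_mul] at h
  have hy := (((Commute.all x y).map
    (algebraMap R (Module.End R (Loc (x * y) M)))).isUnit_mul_iff.mp h).2
  simpa [map_pow] using hy.pow n

/-- The canonical map `M_x → M_{xy}`. -/
abbrev locMapLeft (x y : R) (M : Type*) [AddCommGroup M] [Module R M] :
    Loc x M →ₗ[R] Loc (x * y) M :=
  LocalizedModule.lift (Submonoid.powers x) (locMap (x * y) M) (isUnit_left x y M)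

/-- The canonical map `M_y → M_{xy}`. -/
abbrev locMapRight (x y : R) (M : Type*) [AddCommGroup M] [Module R M] :
    Loc y M →ₗ[R] Loc (x * y) M :=
  LocalizedModule.lift (Submonoid.powers y) (locMap (x * y) M) (isUnit_right x y M)

/-- The first differential `M → M_x ⊕ M_y` of the Čech complex of `(x, y)`. -/
def cechD0 (x y : R) (M : Type*) [AddCommGroup M] [Module R M] :
    M →ₗ[R] Loc x M × Loc y M :=
  (locMap x M).prod (locMap y M)

/-- The second differential `M_x ⊕ M_y → M_{xy}`, `(a, b) ↦ b - a`. -/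
def cechD1 (x y : R) (M : Type*) [AddCommGroup M] [Module R M] :
    Loc x M × Loc y M →ₗ[R] Loc (x * y) M :=
  (locMapRight x y M).comp (LinearMap.snd R _ _) -
    (locMapLeft x y M).comp (LinearMap.fst R _ _)

/-- `H⁰` of the Čech complex of `(x, y)` with coefficients in `M`. -/
def cechH0 (x y : R) (M : Type*) [AddCommGroup M] [Module R M] : Submodule R M :=
  LinearMap.ker (cechD0 x y M)

/-- `H¹` of the Čech complex of `(x, y)` with coefficients in `M`. -/
def cechH1 (x y : R) (M : Type*) [AddCommGroup M] [Module R M] :=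
  LinearMap.ker (cechD1 x y M) ⧸
    Submodule.comap (LinearMap.ker (cechD1 x y M)).subtype (LinearMap.range (cechD0 x y M))

instance (x y : R) (M : Type*) [AddCommGroup M] [Module R M] : AddCommGroup (cechH1 x y M) := by
  unfold cechH1; infer_instance

instance (x y : R) (M : Type*) [AddCommGroup M] [Module R M] : Module R (cechH1 x y M) := by
  unfold cechH1; infer_instance

/-- `H²` of the Čech complex of `(x, y)` with coefficients in `M`. -/
def cechH2 (x y : R) (M : Type*) [AddCommGroup M] [Module R M] :=
  Loc (x * y) M ⧸ LinearMap.range (cechD1 x y M)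

instance (x y : R) (M : Type*) [AddCommGroup M] [Module R M] : AddCommGroup (cechH2 x y M) := by
  unfold cechH2; infer_instance

instance (x y : R) (M : Type*) [AddCommGroup M] [Module R M] : Module R (cechH2 x y M) := by
  unfold cechH2; infer_instance

/-! Inverting `xy` amounts to inverting `y` and then `x`, so `M_y → M_{xy}` is the localization away
from `x`. By exactness, localizing `M → M_y → M/y^∞ → 0` away from `x` gives an exact sequence
`M_x → M_{xy} → (M/y^∞)_x → 0`. Killing the image of `M_y` in `M_{xy}` as well, one obtains `H²` on
one side and the cokernel of `M/y^∞ → (M/y^∞)_x` on the other. -/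

section IteratedLocalization

variable {A : Type*} [CommSemiring A] {M N P : Type*} [AddCommMonoid M] [AddCommMonoid N]
  [AddCommMonoid P] [Module A M] [Module A N] [Module A P]

lemma isLocalizedModule_of_comp_of_le {S T : Submonoid A} (hTS : T ≤ S) (f : M →ₗ[A] N)
    (g : N →ₗ[A] P) [IsLocalizedModule T f] [IsLocalizedModule S (g ∘ₗ f)] :
    IsLocalizedModule S g := by
  have hg : IsLocalizedModule.liftOfLE T S hTS f (g ∘ₗ f) = g :=
    IsLocalizedModule.lift_unique T f _ _ g rfl
  rw [← hg]
  infer_instance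

lemma isLocalizedModule_of_sup_of_isUnit (S T : Submonoid A) (g : N →ₗ[A] P)
    [IsLocalizedModule (S ⊔ T) g] (hT : ∀ t : T, IsUnit (algebraMap A (Module.End A N) t)) :
    IsLocalizedModule S g where
  map_units s := IsLocalizedModule.map_units (S := S ⊔ T) g ⟨s, Submonoid.mem_sup_left s.2⟩
  surj p := by
    obtain ⟨⟨n, u, hu⟩, hn⟩ := IsLocalizedModule.surj (S ⊔ T) g p
    obtain ⟨s, hs, t, ht, rfl⟩ := Submonoid.mem_sup.mp hu
    obtain ⟨n', rfl⟩ := ((Module.End.isUnit_iff _).mp (hT ⟨t, ht⟩)).surjective n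
    refine ⟨⟨n', s, hs⟩,
      IsLocalizedModule.smul_injective (S := S ⊔ T) g ⟨t, Submonoid.mem_sup_right ht⟩ ?_⟩
    simpa [Submonoid.smul_def, smul_smul, mul_comm] using hn
  exists_of_eq {a b} hab := by
    obtain ⟨⟨u, hu⟩, hc⟩ := IsLocalizedModule.exists_of_eq (S := S ⊔ T) hab
    obtain ⟨s, hs, t, ht, rfl⟩ := Submonoid.mem_sup.mp hu
    refine ⟨⟨s, hs⟩, ((Module.End.isUnit_iff _).mp (hT ⟨t, ht⟩)).injective ?_⟩
    simpa [Submonoid.smul_def, smul_smul, mul_comm] using hc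

lemma isLocalizedModule_of_comp_of_sup (S T : Submonoid A) (f : M →ₗ[A] N) (g : N →ₗ[A] P)
    [IsLocalizedModule T f] [IsLocalizedModule (S ⊔ T) (g ∘ₗ f)] : IsLocalizedModule S g :=
  have := isLocalizedModule_of_comp_of_le (le_sup_right : T ≤ S ⊔ T) f g
  isLocalizedModule_of_sup_of_isUnit S T g (IsLocalizedModule.map_units f)

lemma isLocalizedModule_powers_sup_powers (x y : A) (f : M →ₗ[A] N)
    [IsLocalizedModule (Submonoid.powers (x * y)) f] :
    IsLocalizedModule (Submonoid.powers x ⊔ Submonoid.powers y) f := by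
  refine .of_exists_mul_mem (Submonoid.powers (x * y)) _ ?_ ?_ f
  · rw [Submonoid.powers_le]
    exact Submonoid.mul_mem_sup (Submonoid.mem_powers x) (Submonoid.mem_powers y)
  · rintro ⟨_, hu⟩
    obtain ⟨_, ⟨m, rfl⟩, _, ⟨n, rfl⟩, rfl⟩ := Submonoid.mem_sup.mp hu
    exact ⟨x ^ n * y ^ m, m + n, by ring⟩

end IteratedLocalization

section ExactCokernel

variable {A : Type*} [Ring A] {M' N N' Q Q' : Type*} [AddCommGroup M'] [AddCommGroup N]
  [AddCommGroup N'] [AddCommGroup Q] [AddCommGroup Q'] [Module A M'] [Module A N] [Module A N']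
  [Module A Q] [Module A Q'] {f' : M' →ₗ[A] N'} {q : N →ₗ[A] Q} {q' : N' →ₗ[A] Q'}
  {g : N →ₗ[A] N'} {h : Q →ₗ[A] Q'}

lemma comap_range_eq_range_sup_range (hex : Function.Exact f' q') (hq : Function.Surjective q)
    (hcomm : h ∘ₗ q = q' ∘ₗ g) :
    (LinearMap.range h).comap q' = LinearMap.range f' ⊔ LinearMap.range g := by
  have hrange : LinearMap.range h = (LinearMap.range g).map q' := by
    rw [← LinearMap.range_comp, ← hcomm,
      LinearMap.range_comp_of_range_eq_top _ (LinearMap.range_eq_top.mpr hq)]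
  rw [hrange, Submodule.comap_map_eq, hex.linearMap_ker_eq, sup_comm]

/-- For a commutative square `h ∘ q = q' ∘ g` with `q` surjective and an exact sequence
`M' → N' → Q' → 0`, the isomorphism of `N' / (im f' + im g)` with the cokernel of `h` induced
by `q'`. -/
def quotRangeSupRangeEquiv (hex : Function.Exact f' q') (hq : Function.Surjective q)
    (hq' : Function.Surjective q') (hcomm : h ∘ₗ q = q' ∘ₗ g) :
    (N' ⧸ LinearMap.range f' ⊔ LinearMap.range g) ≃ₗ[A] Q' ⧸ LinearMap.range h :=
  Submodule.quotEquivOfEq _ _ (by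
      rw [LinearMap.ker_comp, Submodule.ker_mkQ, comap_range_eq_range_sup_range hex hq hcomm]) ≪≫ₗ
    ((LinearMap.range h).mkQ ∘ₗ q').quotKerEquivOfSurjective
      ((Submodule.mkQ_surjective _).comp hq')

end ExactCokernel

/-- The cokernel of `M' ⊕ N → N'` is the cokernel of `Q → Q'`, where `Q` is the cokernel of
`f : M → N` and primes denote localizations at `S`. -/
def quotRangeMapSupRangeEquiv (S : Submonoid R) {M M' N N' Q' : Type*} [AddCommGroup M]
    [AddCommGroup M'] [AddCommGroup N] [AddCommGroup N'] [AddCommGroup Q'] [Module R M]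
    [Module R M'] [Module R N] [Module R N'] [Module R Q'] (f : M →ₗ[R] N) (locM : M →ₗ[R] M')
    (locN : N →ₗ[R] N') (locQ : (N ⧸ LinearMap.range f) →ₗ[R] Q') [IsLocalizedModule S locM]
    [IsLocalizedModule S locN] [IsLocalizedModule S locQ] :
    (N' ⧸ LinearMap.range (IsLocalizedModule.map S locM locN f) ⊔ LinearMap.range locN) ≃ₗ[R]
      Q' ⧸ LinearMap.range locQ :=
  have hq := Submodule.mkQ_surjective (LinearMap.range f)
  quotRangeSupRangeEquiv
    (IsLocalizedModule.map_exact S locM locN locQ _ _ (LinearMap.exact_map_mkQ_range f)) hq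
    (IsLocalizedModule.map_surjective S locN locQ _ hq)
    (IsLocalizedModule.map_comp S locN locQ _).symm

section Cech

variable (x y : R) (M : Type*) [AddCommGroup M] [Module R M]

lemma locMapLeft_comp_locMap : locMapLeft x y M ∘ₗ locMap x M = locMap (x * y) M :=
  LocalizedModule.lift_comp _ _ (isUnit_left x y M)

lemma locMapRight_comp_locMap : locMapRight x y M ∘ₗ locMap y M = locMap (x * y) M :=
  LocalizedModule.lift_comp _ _ (isUnit_right x y M)

instance isLocalizedModule_locMapRight :
    IsLocalizedModule (Submonoid.powers x) (locMapRight x y M) := by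
  have : IsLocalizedModule (Submonoid.powers x ⊔ Submonoid.powers y)
      (locMapRight x y M ∘ₗ locMap y M) := by
    rw [locMapRight_comp_locMap]
    exact isLocalizedModule_powers_sup_powers x y _
  exact isLocalizedModule_of_comp_of_sup _ (Submonoid.powers y) (locMap y M) _

lemma map_locMap_eq_locMapLeft :
    IsLocalizedModule.map (Submonoid.powers x) (locMap x M) (locMapRight x y M) (locMap y M) =
      locMapLeft x y M := by
  apply IsLocalizedModule.ext (Submonoid.powers x) (locMap x M) (isUnit_left x y M)
  rw [IsLocalizedModule.map_comp, locMapRight_comp_locMap, locMapLeft_comp_locMap]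

lemma range_cechD1 :
    LinearMap.range (cechD1 x y M) =
      LinearMap.range (locMapLeft x y M) ⊔ LinearMap.range (locMapRight x y M) := by
  have hcoprod : cechD1 x y M = (-locMapLeft x y M).coprod (locMapRight x y M) := by
    ext <;> simp [cechD1]
  rw [hcoprod, LinearMap.range_coprod, LinearMap.range_neg]

end Cech

/-- The second Čech local cohomology group `H²_{(x,y)}(M)` is isomorphic to
`(M/y^∞)/x^∞`, the cokernel of `K → K_x` where `K = M/y^∞` is the cokernel
of `M → M_y`. -/
theorem cechH2_iso_cokLoc_cokLoc (x y : R) (M : Type*) [AddCommGroup M] [Module R M] :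
    Nonempty (cechH2 x y M ≃ₗ[R] CokLoc x (CokLoc y M)) := by
  have hrange : LinearMap.range (cechD1 x y M) =
      LinearMap.range (IsLocalizedModule.map (Submonoid.powers x) (locMap x M)
        (locMapRight x y M) (locMap y M)) ⊔ LinearMap.range (locMapRight x y M) := by
    rw [range_cechD1, map_locMap_eq_locMapLeft]
  exact ⟨Submodule.quotEquivOfEq _ _ hrange ≪≫ₗ
    quotRangeMapSupRangeEquiv (Submonoid.powers x) (locMap y M) (locMap x M)
      (locMapRight x y M) (locMap x (CokLoc y M))⟩

end
end

section
/- Let R be a commutative ring, x, y ∈ R, and M an R-module. If every y-power torsion element of M is x-power torsion, i.e. Γ_y M ⊆ Γ_x M, then (Γ_y M)/x^∞ = 0 and the natural map H¹_{(x,y)}(M) → Γ_x(M/y^∞) is an isomorphism of R-modules. -/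
noncomputable section

variable {R : Type*} [CommRing R]

/-- The `x`-power torsion submodule `Γ_x M = {m ∈ M : xⁿ • m = 0 for some n}`. -/
def elPowerTorsion (x : R) (M : Type*) [AddCommGroup M] [Module R M] : Submodule R M :=
  ⨆ n : ℕ, Submodule.torsionBy R M (x ^ n)

/-!
A Čech 1-cocycle is a pair `(a, b) ∈ M_x × M_y` with equal images in `M_{xy}`, and the natural map
sends its class to the class of `b` in `M/y^∞`. Up to coboundaries, the cocycles with `b ∈ im M` are
those of the form `(a, 0)` with `a ∈ ker (M_x → M_{xy}) = Γ_y(M_x) = (Γ_y M)_x`, which gives a short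
exact sequence `0 → (Γ_y M)/x^∞ → H¹_{(x,y)}(M) → Γ_x(M/y^∞) → 0` for every `M`. If `Γ_y M ⊆ Γ_x M`,
then already `(Γ_y M)_x = 0`, so the second map of the sequence is bijective.
-/

section

variable {x y : R} {M : Type*} [AddCommGroup M] [Module R M]

lemma mem_elPowerTorsion {m : M} : m ∈ elPowerTorsion x M ↔ ∃ n : ℕ, x ^ n • m = 0 := by
  have directed : Directed (· ≤ ·) fun n : ℕ ↦ Submodule.torsionBy R M (x ^ n) :=
    Monotone.directed_le fun _ _ hab ↦
      Submodule.torsionBy_le_torsionBy_of_dvd _ _ (pow_dvd_pow x hab)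
  simp only [elPowerTorsion, Submodule.mem_iSup_of_directed _ directed,
    Submodule.mem_torsionBy_iff]

lemma mem_elPowerTorsion_of_pow_smul_mem {m : M} (n : ℕ)
    (hm : x ^ n • m ∈ elPowerTorsion x M) : m ∈ elPowerTorsion x M := by
  obtain ⟨k, hk⟩ := mem_elPowerTorsion.1 hm
  exact mem_elPowerTorsion.2 ⟨k + n, by rw [pow_add, mul_smul, hk]⟩

lemma map_mem_elPowerTorsion {N : Type*} [AddCommGroup N] [Module R N] (φ : M →ₗ[R] N) {m : M}
    (hm : m ∈ elPowerTorsion x M) : φ m ∈ elPowerTorsion x N := by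
  obtain ⟨n, hn⟩ := mem_elPowerTorsion.1 hm
  exact mem_elPowerTorsion.2 ⟨n, by rw [← map_smul, hn, map_zero]⟩

lemma locMap_eq_zero_iff {m : M} : locMap x M m = 0 ↔ m ∈ elPowerTorsion x M := by
  rw [← LinearMap.mem_ker, LocalizedModule.mem_ker_mkLinearMap_iff, mem_elPowerTorsion]
  simp only [Submonoid.mem_powers_iff, exists_exists_eq_and]

lemma pow_smul_bijective_loc (n : ℕ) : Function.Bijective fun a : Loc x M ↦ x ^ n • a :=
  (Module.End.isUnit_iff _).1
    (IsLocalizedModule.map_units (locMap x M) (⟨x ^ n, n, rfl⟩ : Submonoid.powers x))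

lemma pow_smul_eq_zero_iff_loc (n : ℕ) {a : Loc x M} : x ^ n • a = 0 ↔ a = 0 :=
  (pow_smul_bijective_loc n).injective.eq_iff' (smul_zero _)

lemma exists_pow_smul_eq_locMap (a : Loc x M) : ∃ (n : ℕ) (m : M), x ^ n • a = locMap x M m := by
  obtain ⟨⟨m, ⟨_, n, rfl⟩⟩, hm⟩ := IsLocalizedModule.surj (Submonoid.powers x) (locMap x M) a
  exact ⟨n, m, hm⟩

lemma subsingleton_loc_of_le_elPowerTorsion {N : Submodule R M} (hN : N ≤ elPowerTorsion x M) :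
    Subsingleton (Loc x N) := by
  refine LocalizedModule.subsingleton_iff.2 fun m ↦ ?_
  obtain ⟨n, hn⟩ := mem_elPowerTorsion.1 (hN m.2)
  exact ⟨x ^ n, ⟨n, rfl⟩, Subtype.ext hn⟩

lemma exists_pow_smul_eq_locMap_of_mem_elPowerTorsion_loc {a : Loc x M}
    (ha : a ∈ elPowerTorsion y (Loc x M)) :
    ∃ (n : ℕ) (m : M), m ∈ elPowerTorsion y M ∧ x ^ n • a = locMap x M m := by
  obtain ⟨k, hk⟩ := mem_elPowerTorsion.1 ha
  obtain ⟨n, m, hm⟩ := exists_pow_smul_eq_locMap a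
  have hkm : locMap x M (y ^ k • m) = 0 := by
    rw [map_smul, ← hm, smul_comm, hk, smul_zero]
  obtain ⟨j, hj⟩ := mem_elPowerTorsion.1 (locMap_eq_zero_iff.1 hkm)
  refine ⟨j + n, x ^ j • m, mem_elPowerTorsion.2 ⟨k, by rw [smul_comm, hj]⟩, ?_⟩
  rw [pow_add, mul_smul, hm, map_smul]

/-- The localization `N_x → M_x` of the inclusion of a submodule `N ⊆ M`. -/
def locSubtype (x : R) (N : Submodule R M) : Loc x N →ₗ[R] Loc x M :=
  IsLocalizedModule.map (Submonoid.powers x) (locMap x N) (locMap x M) N.subtype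

lemma locSubtype_locMap (N : Submodule R M) (m : N) :
    locSubtype x N (locMap x N m) = locMap x M m :=
  IsLocalizedModule.map_apply _ _ _ _ _

lemma locSubtype_injective (N : Submodule R M) : Function.Injective (locSubtype x N) :=
  IsLocalizedModule.map_injective _ _ _ _ N.subtype_injective

lemma range_locSubtype_elPowerTorsion :
    LinearMap.range (locSubtype x (elPowerTorsion y M)) = elPowerTorsion y (Loc x M) := by
  ext a
  constructor
  · rintro ⟨c, rfl⟩
    obtain ⟨n, m, hm⟩ := exists_pow_smul_eq_locMap c
    obtain ⟨k, hk⟩ := mem_elPowerTorsion.1 m.2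
    refine mem_elPowerTorsion.2 ⟨k, (pow_smul_eq_zero_iff_loc n).1 ?_⟩
    rw [smul_comm, ← map_smul, hm, locSubtype_locMap, ← map_smul, hk, map_zero]
  · intro ha
    obtain ⟨n, m, hmy, hm⟩ := exists_pow_smul_eq_locMap_of_mem_elPowerTorsion_loc ha
    obtain ⟨c, hc : x ^ n • c = _⟩ :=
      (pow_smul_bijective_loc n).surjective (locMap x (elPowerTorsion y M) ⟨m, hmy⟩)
    refine ⟨c, (pow_smul_bijective_loc n).injective ?_⟩
    calc x ^ n • locSubtype x (elPowerTorsion y M) c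
        = locSubtype x (elPowerTorsion y M) (x ^ n • c) := (map_smul _ _ _).symm
      _ = locMap x M m := by rw [hc, locSubtype_locMap]
      _ = x ^ n • a := hm.symm

lemma ker_eq_elPowerTorsion_of_apply_locMap {s t u : R} (hu : u = s * t)
    {φ : Loc s M →ₗ[R] Loc u M} (hφ : ∀ m, φ (locMap s M m) = locMap u M m) :
    LinearMap.ker φ = elPowerTorsion t (Loc s M) := by
  ext a
  rw [LinearMap.mem_ker, mem_elPowerTorsion]
  constructor
  · intro ha
    obtain ⟨n, m, hm⟩ := exists_pow_smul_eq_locMap a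
    have hm0 : locMap u M m = 0 := by rw [← hφ, ← hm, map_smul, ha, smul_zero]
    obtain ⟨k, hk⟩ := mem_elPowerTorsion.1 (locMap_eq_zero_iff.1 hm0)
    refine ⟨k, (pow_smul_eq_zero_iff_loc n).1 ((pow_smul_eq_zero_iff_loc k).1 ?_)⟩
    rw [smul_comm (s ^ n), hm, smul_smul, ← mul_pow, ← hu, ← map_smul, hk, map_zero]
  · rintro ⟨k, hk⟩
    have hpow : u ^ k = s ^ k * t ^ k := by rw [hu, mul_pow]
    refine (pow_smul_eq_zero_iff_loc k).1 ?_
    rw [← map_smul, hpow, mul_smul, hk, smul_zero, map_zero]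

lemma locMapLeft_locMap (m : M) : locMapLeft x y M (locMap x M m) = locMap (x * y) M m :=
  LinearMap.congr_fun (LocalizedModule.lift_comp _ _ (isUnit_left x y M)) m

lemma locMapRight_locMap (m : M) : locMapRight x y M (locMap y M m) = locMap (x * y) M m :=
  LinearMap.congr_fun (LocalizedModule.lift_comp _ _ (isUnit_right x y M)) m

lemma ker_locMapLeft : LinearMap.ker (locMapLeft x y M) = elPowerTorsion y (Loc x M) :=
  ker_eq_elPowerTorsion_of_apply_locMap rfl locMapLeft_locMap

lemma ker_locMapRight : LinearMap.ker (locMapRight x y M) = elPowerTorsion x (Loc y M) :=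
  ker_eq_elPowerTorsion_of_apply_locMap (mul_comm x y) locMapRight_locMap

lemma mem_ker_cechD1 {p : Loc x M × Loc y M} :
    p ∈ LinearMap.ker (cechD1 x y M) ↔ locMapRight x y M p.2 = locMapLeft x y M p.1 :=
  sub_eq_zero

lemma inl_mem_ker_cechD1 {a : Loc x M} :
    ((a, 0) : Loc x M × Loc y M) ∈ LinearMap.ker (cechD1 x y M) ↔
      a ∈ elPowerTorsion y (Loc x M) := by
  rw [mem_ker_cechD1, map_zero, eq_comm, ← ker_locMapLeft, LinearMap.mem_ker]

lemma cechD0_mem_ker_cechD1 (m : M) : cechD0 x y M m ∈ LinearMap.ker (cechD1 x y M) :=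
  mem_ker_cechD1.2 ((locMapRight_locMap m).trans (locMapLeft_locMap m).symm)

lemma mkQ_snd_mem_elPowerTorsion {p : Loc x M × Loc y M} (hp : p ∈ LinearMap.ker (cechD1 x y M)) :
    (LinearMap.range (locMap y M)).mkQ p.2 ∈ elPowerTorsion x (CokLoc y M) := by
  obtain ⟨n, m, hm⟩ := exists_pow_smul_eq_locMap p.1
  have hker : x ^ n • p.2 - locMap y M m ∈ elPowerTorsion x (Loc y M) := by
    rw [← ker_locMapRight, LinearMap.mem_ker, map_sub, map_smul, mem_ker_cechD1.1 hp,
      locMapRight_locMap, ← locMapLeft_locMap, ← hm, map_smul, sub_self]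
  have hmkQ : (LinearMap.range (locMap y M)).mkQ (x ^ n • p.2 - locMap y M m) =
      x ^ n • (LinearMap.range (locMap y M)).mkQ p.2 := by
    rw [map_sub, map_smul, sub_eq_self, ← LinearMap.mem_ker, Submodule.ker_mkQ]
    exact LinearMap.mem_range_self _ m
  exact mem_elPowerTorsion_of_pow_smul_mem n (hmkQ ▸ map_mem_elPowerTorsion _ hker)

lemma exists_mem_ker_cechD1_of_mkQ_mem_elPowerTorsion {b : Loc y M}
    (hb : (LinearMap.range (locMap y M)).mkQ b ∈ elPowerTorsion x (CokLoc y M)) :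
    ∃ a : Loc x M, (a, b) ∈ LinearMap.ker (cechD1 x y M) := by
  obtain ⟨n, hn⟩ := mem_elPowerTorsion.1 hb
  rw [← map_smul, ← LinearMap.mem_ker, Submodule.ker_mkQ] at hn
  obtain ⟨m, hm⟩ := hn
  obtain ⟨a, ha⟩ := (pow_smul_bijective_loc n).surjective (locMap x M m)
  have smul_injective : Function.Injective fun c : Loc (x * y) M ↦ x ^ n • c :=
    ((Module.End.isUnit_iff _).1 (isUnit_left x y M ⟨x ^ n, n, rfl⟩)).injective
  refine ⟨a, mem_ker_cechD1.2 (smul_injective ?_)⟩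
  calc x ^ n • locMapRight x y M b
      = locMapRight x y M (locMap y M m) := by rw [hm, map_smul]
    _ = locMapLeft x y M (locMap x M m) := by rw [locMapRight_locMap, locMapLeft_locMap]
    _ = x ^ n • locMapLeft x y M a := by rw [← ha, map_smul]

/-- The projection from Čech 1-cocycles to `H¹_{(x,y)}(M)`. -/
def cechH1Mk (x y : R) (M : Type*) [AddCommGroup M] [Module R M] :
    LinearMap.ker (cechD1 x y M) →ₗ[R] cechH1 x y M :=
  Submodule.mkQ _

lemma cechH1Mk_surjective : Function.Surjective (cechH1Mk x y M) :=
  Submodule.mkQ_surjective _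

lemma cechH1Mk_eq_zero_iff {p : LinearMap.ker (cechD1 x y M)} :
    cechH1Mk x y M p = 0 ↔ ∃ m, cechD0 x y M m = p :=
  Submodule.Quotient.mk_eq_zero _

/-- The cocycle `(a, 0)` attached to `a ∈ (Γ_y M)_x`. -/
def torsionCocycle (x y : R) (M : Type*) [AddCommGroup M] [Module R M] :
    Loc x (elPowerTorsion y M) →ₗ[R] LinearMap.ker (cechD1 x y M) :=
  (LinearMap.inl R (Loc x M) (Loc y M) ∘ₗ locSubtype x (elPowerTorsion y M)).codRestrict _
    fun a ↦ inl_mem_ker_cechD1.2 (range_locSubtype_elPowerTorsion.le (LinearMap.mem_range_self _ a))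

lemma cechH1Mk_torsionCocycle_eq_zero_iff {a : Loc x (elPowerTorsion y M)} :
    cechH1Mk x y M (torsionCocycle x y M a) = 0 ↔
      a ∈ LinearMap.range (locMap x (elPowerTorsion y M)) := by
  rw [cechH1Mk_eq_zero_iff]
  constructor
  · rintro ⟨m, hm⟩
    obtain ⟨hma, hm0⟩ := Prod.ext_iff.1 hm
    refine ⟨⟨m, locMap_eq_zero_iff.1 hm0⟩, locSubtype_injective _ ?_⟩
    exact (locSubtype_locMap _ _).trans hma
  · rintro ⟨m, rfl⟩
    exact ⟨m, Prod.ext (locSubtype_locMap _ m).symm (locMap_eq_zero_iff.2 m.2)⟩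

/-- The natural map `(Γ_y M)/x^∞ → H¹_{(x,y)}(M)`, induced by `a ↦ (a, 0)`. -/
def cokLocTorsionToCechH1 (x y : R) (M : Type*) [AddCommGroup M] [Module R M] :
    CokLoc x (elPowerTorsion y M) →ₗ[R] cechH1 x y M :=
  (LinearMap.range (locMap x (elPowerTorsion y M))).liftQ
    (cechH1Mk x y M ∘ₗ torsionCocycle x y M) fun _ ↦ cechH1Mk_torsionCocycle_eq_zero_iff.2

lemma cokLocTorsionToCechH1_mk (a : Loc x (elPowerTorsion y M)) :
    cokLocTorsionToCechH1 x y M (Submodule.Quotient.mk a) =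
      cechH1Mk x y M (torsionCocycle x y M a) :=
  rfl

lemma cokLocTorsionToCechH1_injective : Function.Injective (cokLocTorsionToCechH1 x y M) := by
  rw [← LinearMap.ker_eq_bot]
  exact Submodule.ker_liftQ_eq_bot _ _ _ fun _ ↦ cechH1Mk_torsionCocycle_eq_zero_iff.1

/-- The map `(a, b) ↦ [b]` from Čech 1-cocycles to `Γ_x(M/y^∞)`. -/
def cocycleToTorsionCokLoc (x y : R) (M : Type*) [AddCommGroup M] [Module R M] :
    LinearMap.ker (cechD1 x y M) →ₗ[R] elPowerTorsion x (CokLoc y M) :=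
  ((LinearMap.range (locMap y M)).mkQ ∘ₗ LinearMap.snd R (Loc x M) (Loc y M)).restrict
    fun _ ↦ mkQ_snd_mem_elPowerTorsion

lemma cocycleToTorsionCokLoc_eq_zero_iff {p : LinearMap.ker (cechD1 x y M)} :
    cocycleToTorsionCokLoc x y M p = 0 ↔ ∃ m, locMap y M m = p.1.2 :=
  Subtype.ext_iff.trans (Submodule.Quotient.mk_eq_zero _)

lemma cocycleToTorsionCokLoc_surjective : Function.Surjective (cocycleToTorsionCokLoc x y M) := by
  rintro ⟨c, hc⟩
  obtain ⟨b, rfl⟩ := Submodule.mkQ_surjective _ c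
  obtain ⟨a, hab⟩ := exists_mem_ker_cechD1_of_mkQ_mem_elPowerTorsion hc
  exact ⟨⟨(a, b), hab⟩, rfl⟩

/-- The natural map `H¹_{(x,y)}(M) → Γ_x(M/y^∞)`, induced by `(a, b) ↦ [b]`. -/
def cechH1ToTorsionCokLoc (x y : R) (M : Type*) [AddCommGroup M] [Module R M] :
    cechH1 x y M →ₗ[R] elPowerTorsion x (CokLoc y M) :=
  Submodule.liftQ _ (cocycleToTorsionCokLoc x y M) fun _ ⟨m, hm⟩ ↦
    cocycleToTorsionCokLoc_eq_zero_iff.2 ⟨m, congrArg Prod.snd hm⟩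

lemma cechH1ToTorsionCokLoc_cechH1Mk (p : LinearMap.ker (cechD1 x y M)) :
    cechH1ToTorsionCokLoc x y M (cechH1Mk x y M p) = cocycleToTorsionCokLoc x y M p :=
  rfl

lemma cechH1ToTorsionCokLoc_surjective : Function.Surjective (cechH1ToTorsionCokLoc x y M) :=
  fun c ↦ (cocycleToTorsionCokLoc_surjective c).imp' (cechH1Mk x y M) fun _ ↦ id

lemma exists_torsionCocycle_add_cechD0 {p : LinearMap.ker (cechD1 x y M)} {m : M}
    (hm : locMap y M m = p.1.2) :
    ∃ a, torsionCocycle x y M a + ⟨cechD0 x y M m, cechD0_mem_ker_cechD1 m⟩ = p := by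
  have hsub : p.1 - cechD0 x y M m = (p.1.1 - locMap x M m, 0) :=
    Prod.ext rfl (sub_eq_zero.2 hm.symm)
  have hcocycle : ((p.1.1 - locMap x M m, 0) : Loc x M × Loc y M) ∈ LinearMap.ker (cechD1 x y M) :=
    hsub ▸ sub_mem p.2 (cechD0_mem_ker_cechD1 m)
  obtain ⟨a, ha⟩ := range_locSubtype_elPowerTorsion.ge (inl_mem_ker_cechD1.1 hcocycle)
  have hdiff : (torsionCocycle x y M a : Loc x M × Loc y M) = p.1 - cechD0 x y M m := by
    rw [hsub]
    exact Prod.ext ha rfl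
  exact ⟨a, Subtype.ext (eq_sub_iff_add_eq.1 hdiff)⟩

lemma exact_cokLocTorsionToCechH1_cechH1ToTorsionCokLoc :
    Function.Exact (cokLocTorsionToCechH1 x y M) (cechH1ToTorsionCokLoc x y M) := by
  intro z
  obtain ⟨p, rfl⟩ := cechH1Mk_surjective z
  rw [cechH1ToTorsionCokLoc_cechH1Mk, cocycleToTorsionCokLoc_eq_zero_iff]
  constructor
  · rintro ⟨m, hm⟩
    obtain ⟨a, rfl⟩ := exists_torsionCocycle_add_cechD0 hm
    have hcoboundary : cechH1Mk x y M ⟨cechD0 x y M m, cechD0_mem_ker_cechD1 m⟩ = 0 :=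
      cechH1Mk_eq_zero_iff.2 ⟨m, rfl⟩
    refine ⟨Submodule.Quotient.mk a, ?_⟩
    rw [cokLocTorsionToCechH1_mk, map_add, hcoboundary, add_zero]
  · rintro ⟨c, hc⟩
    obtain ⟨a, rfl⟩ := Submodule.Quotient.mk_surjective _ c
    rw [← cocycleToTorsionCokLoc_eq_zero_iff, ← cechH1ToTorsionCokLoc_cechH1Mk, ← hc,
      cokLocTorsionToCechH1_mk, cechH1ToTorsionCokLoc_cechH1Mk]
    exact cocycleToTorsionCokLoc_eq_zero_iff.2 ⟨0, map_zero _⟩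

end

/-- If every `y`-power torsion element of `M` is `x`-power torsion, then
`(Γ_y M)/x^∞ = 0` and the natural map `H¹_{(x,y)}(M) → Γ_x(M/y^∞)` appearing in the
short exact sequence `0 → (Γ_y M)/x^∞ → H¹_{(x,y)}(M) → Γ_x(M/y^∞) → 0`
is an isomorphism of `R`-modules. -/
theorem cechH1_iso_of_le (x y : R) (M : Type*) [AddCommGroup M] [Module R M]
    (h : elPowerTorsion y M ≤ elPowerTorsion x M) :
    Subsingleton (CokLoc x (elPowerTorsion y M)) ∧
    ∃ (f : CokLoc x (elPowerTorsion y M) →ₗ[R] cechH1 x y M)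
      (g : cechH1 x y M →ₗ[R] elPowerTorsion x (CokLoc y M)),
      Function.Injective f ∧ Function.Exact f g ∧ Function.Surjective g ∧
        Function.Bijective g := by
  have hLoc : Subsingleton (Loc x (elPowerTorsion y M)) := subsingleton_loc_of_le_elPowerTorsion h
  have hCok : Subsingleton (CokLoc x (elPowerTorsion y M)) := inferInstance
  have hExact := exact_cokLocTorsionToCechH1_cechH1ToTorsionCokLoc (x := x) (y := y) (M := M)
  have hInjective : Function.Injective (cechH1ToTorsionCokLoc x y M) := by
    rw [Subsingleton.elim (cokLocTorsionToCechH1 x y M) 0] at hExact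
    exact (LinearMap.exact_zero_iff_injective _ _).1 hExact
  exact ⟨hCok, cokLocTorsionToCechH1 x y M, cechH1ToTorsionCokLoc x y M,
    cokLocTorsionToCechH1_injective, hExact, cechH1ToTorsionCokLoc_surjective,
    hInjective, cechH1ToTorsionCokLoc_surjective⟩

end
end

section
/- Let d be a nonzero element of ℤ₂ and let P be the ℤ₂[B]-module with two generators D and b and the single defining relation B·D = d·b, i.e. P = ℤ₂[B]^{⊕2}/⟨(B, −d)⟩. Then B acts injectively on P; the localization P_B is a free ℤ₂[B, B⁻¹]-module of rank one generated by the image of b; and the cokernel of the localization map P → P_B is isomorphic as a ℤ₂[B]-module to ℤ₂[B, B⁻¹]/(ℤ₂[B] + ℤ₂·d·B⁻¹), in which d times the class of b/B is zero; as a ℤ₂-module this cokernel is isomorphic to (ℤ₂/d) ⊕ ⨁_{k≥2} ℤ₂. -/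
set_option synthInstance.maxHeartbeats 400000

noncomputable section

/-- `ℤ₂[B]`, the polynomial ring over the 2-adic integers with `B = X`. -/
abbrev S2 : Type _ := Polynomial ℤ_[2]

/-- The `ℤ₂[B]`-module `P = ℤ₂[B]{D, b}/(B·D = d·b)`. -/
abbrev Pmod (d : ℤ_[2]) : Type _ :=
  (S2 × S2) ⧸ Submodule.span S2 {((Polynomial.X : S2), -(Polynomial.C d))}

/-- The generator `b` of `P`. -/
def genb (d : ℤ_[2]) : Pmod d := Submodule.Quotient.mk ((0 : S2), (1 : S2))

/-- The localization `P_B` of `P` away from `B`. -/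
abbrev PmodLoc (d : ℤ_[2]) : Type _ :=
  LocalizedModule (Submonoid.powers (Polynomial.X : S2)) (Pmod d)

/-- The localization map `P → P_B`. -/
abbrev locMapP (d : ℤ_[2]) : Pmod d →ₗ[S2] PmodLoc d :=
  LocalizedModule.mkLinearMap (Submonoid.powers (Polynomial.X : S2)) (Pmod d)

/-- The cokernel `P/B^∞` of `P → P_B`. -/
abbrev PmodCok (d : ℤ_[2]) : Type _ := PmodLoc d ⧸ LinearMap.range (locMapP d)

/-- `ℤ₂[B,B⁻¹]/(ℤ₂[B] + ℤ₂·d·B⁻¹)`. -/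
abbrev Wmod (d : ℤ_[2]) : Type _ :=
  LaurentPolynomial ℤ_[2] ⧸
    Submodule.span S2
      (Set.range (Polynomial.toLaurent : S2 → LaurentPolynomial ℤ_[2]) ∪
        {LaurentPolynomial.C d * LaurentPolynomial.T (-1)})

/-- The cokernel `P/B^∞` as a `ℤ₂`-module. -/
instance (d : ℤ_[2]) : Module ℤ_[2] (PmodCok d) :=
  Module.compHom _ (Polynomial.C : ℤ_[2] →+* S2)

/-!
Let `L` be the localization of `A` away from `x`, and let `P = TwoGen x d`. Since `x • P` lies in
the span of `b`, the map `P → L` with `D ↦ d / x` and `b ↦ 1` is already a localization of `P`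
away from `x`. Hence the cokernel is `L / (A + A · d / x)`. For `A = R[B]` and `x = B`, a Laurent
polynomial lies in the denominator exactly when its pole is at most simple with residue divisible
by `d`, so the coefficients of the negative powers of `B` split the quotient over `R`. Finally, `x`
acts injectively on `P` exactly when `d` is a nonzerodivisor modulo `x`.
-/

open scoped Polynomial LaurentPolynomial

/-- The restriction of scalars of a linear equivalence along `algebraMap R S`, the source being
given the `R`-module structure pulled back from `S`. -/
def compHomEquiv (R : Type*) {S M N : Type*} [CommSemiring R] [Semiring S] [Algebra R S]
    [AddCommMonoid M] [AddCommMonoid N] [Module S M] [Module S N] [Module R N]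
    [IsScalarTower R S N] (e : M ≃ₗ[S] N) :
    letI : Module R M := Module.compHom M (algebraMap R S)
    M ≃ₗ[R] N :=
  letI : Module R M := Module.compHom M (algebraMap R S)
  haveI : IsScalarTower R S M := IsScalarTower.of_compHom R S M
  e.restrictScalars R

/-- The module on two generators `D` and `b` over a commutative ring, with the single relation
`x • D = d • b`. -/
abbrev TwoGen {A : Type*} [CommRing A] (x d : A) : Type _ :=
  (A × A) ⧸ Submodule.span A {(x, -d)}

namespace TwoGen

section

variable {A : Type*} [CommRing A] (x d : A)

/-- The generator `D` of `TwoGen x d`. -/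
def genD : TwoGen x d := Submodule.Quotient.mk (1, 0)

/-- The generator `b` of `TwoGen x d`. -/
def genb : TwoGen x d := Submodule.Quotient.mk (0, 1)

/-- The localization of `TwoGen x d` away from `x`. -/
abbrev Loc : Type _ := LocalizedModule (Submonoid.powers x) (TwoGen x d)

/-- The localization map from `TwoGen x d` to `Loc x d`. -/
abbrev toLoc : TwoGen x d →ₗ[A] Loc x d :=
  LocalizedModule.mkLinearMap (Submonoid.powers x) (TwoGen x d)

/-- The cokernel of the localization map, written `ko[k]/B^∞` in the paper. -/
abbrev Cok : Type _ := Loc x d ⧸ LinearMap.range (toLoc x d)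

lemma mk_eq_smul_add_smul (f g : A) :
    (Submodule.Quotient.mk (f, g) : TwoGen x d) = f • genD x d + g • genb x d := by
  simp [genD, genb, ← Submodule.Quotient.mk_smul, ← Submodule.Quotient.mk_add]

lemma mk_eq_zero_iff (f g : A) :
    (Submodule.Quotient.mk (f, g) : TwoGen x d) = 0 ↔ ∃ h, f = h * x ∧ g = -(h * d) := by
  rw [Submodule.Quotient.mk_eq_zero, Submodule.mem_span_singleton]
  simp [eq_comm]

lemma smul_genD : x • genD x d = d • genb x d := by
  simp only [genD, genb, ← Submodule.Quotient.mk_smul, Submodule.Quotient.eq]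
  exact Submodule.subset_span (by simp)

lemma exists_smul_eq_smul_genb (p : TwoGen x d) : ∃ a : A, x • p = a • genb x d := by
  obtain ⟨⟨f, g⟩, rfl⟩ := Submodule.Quotient.mk_surjective _ p
  refine ⟨f * d + x * g, ?_⟩
  rw [mk_eq_smul_add_smul, smul_add, smul_comm, smul_genD, add_smul, mul_smul, mul_smul]

variable {x} in
lemma smul_injective_iff (hx : x ∈ nonZeroDivisors A) :
    Function.Injective (fun p : TwoGen x d => x • p) ↔ ∀ f, x ∣ d * f → x ∣ f := by
  have hx_cancel {a b : A} : x * a = x * b ↔ a = b := mul_cancel_left_mem_nonZeroDivisors hx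
  change Function.Injective (DistribSMul.toAddMonoidHom (TwoGen x d) x) ↔ _
  rw [injective_iff_map_eq_zero]
  constructor
  · rintro hinj f ⟨g, hg⟩
    have hzero : (Submodule.Quotient.mk (f, -g) : TwoGen x d) = 0 :=
      hinj _ ((mk_eq_zero_iff x d (x * f) (x * -g)).2 ⟨f, by ring, by linear_combination hg⟩)
    obtain ⟨h, rfl, -⟩ := (mk_eq_zero_iff x d f (-g)).1 hzero
    exact dvd_mul_left x h
  · intro hdvd p hp
    obtain ⟨⟨f, g⟩, rfl⟩ := Submodule.Quotient.mk_surjective _ p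
    obtain ⟨h, hf, hg⟩ := (mk_eq_zero_iff x d (x * f) (x * g)).1 hp
    obtain rfl : f = h := hx_cancel.1 (by rw [hf, mul_comm])
    obtain ⟨k, rfl⟩ := hdvd f ⟨-g, by linear_combination hg⟩
    exact (mk_eq_zero_iff x d (x * k) g).2
      ⟨k, mul_comm x k, hx_cancel.1 (by linear_combination hg)⟩

end

section

variable {A : Type*} [CommRing A] (x d : A) (L : Type*) [CommRing L] [Algebra A L]
  [IsLocalization.Away x L]

/-- The fraction `d / x` in a model `L` of the localization of `A` away from `x`. -/
abbrev frac : L := IsLocalization.mk' L d (⟨x, Submonoid.mem_powers x⟩ : Submonoid.powers x)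

/-- The linear map from `TwoGen x d` to a model `L` of the localization of `A` away from `x` that
sends `D` to `d / x` and `b` to `1`. -/
def toAway : TwoGen x d →ₗ[A] L :=
  Submodule.liftQ _
    ((LinearMap.toSpanSingleton A L (frac x d L)).coprod (Algebra.linearMap A L)) <| by
      rw [Submodule.span_le, Set.singleton_subset_iff]
      simp [Algebra.smul_def]

lemma toAway_genb : toAway x d L (genb x d) = 1 := by
  simp [toAway, genb]

variable {x d} in
lemma algebraMap_eq_smul_toAway {p : TwoGen x d} {a : A} (h : x • p = a • genb x d) :
    algebraMap A L a = x • toAway x d L p := by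
  rw [← map_smul, h, map_smul, toAway_genb, Algebra.algebraMap_eq_smul_one]

lemma range_toAway :
    LinearMap.range (toAway x d L) =
      Submodule.span A (Set.range (algebraMap A L) ∪ {frac x d L}) := by
  have hrange : Set.range (algebraMap A L) = LinearMap.range (Algebra.linearMap A L) := rfl
  rw [toAway, Submodule.range_liftQ, LinearMap.range_coprod, LinearMap.range_toSpanSingleton,
    Submodule.span_union, hrange, Submodule.span_eq, sup_comm]

-- Multiplication by `x` carries `TwoGen x d` into the span of `b`, on which `toAway` is
-- the localization map of `A`.
instance isLocalizedModule_toAway : IsLocalizedModule (Submonoid.powers x) (toAway x d L) where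
  map_units := IsLocalizedModule.map_units (Algebra.linearMap A L)
  surj y := by
    obtain ⟨⟨a, s⟩, has⟩ := IsLocalizedModule.surj (Submonoid.powers x) (Algebra.linearMap A L) y
    refine ⟨(a • genb x d, s), ?_⟩
    rw [has, map_smul, toAway_genb, Algebra.linearMap_apply, Algebra.algebraMap_eq_smul_one]
  exists_of_eq {p q} hpq := by
    obtain ⟨a, ha⟩ := exists_smul_eq_smul_genb x d p
    obtain ⟨a', ha'⟩ := exists_smul_eq_smul_genb x d q
    have hmap : algebraMap A L a = algebraMap A L a' := by
      rw [algebraMap_eq_smul_toAway L ha, algebraMap_eq_smul_toAway L ha', hpq]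
    obtain ⟨c, hc⟩ := IsLocalization.exists_of_eq (M := Submonoid.powers x) hmap
    refine ⟨c * ⟨x, Submonoid.mem_powers x⟩, ?_⟩
    simp only [mul_smul, Submonoid.smul_def, ha, ha']
    rw [← mul_smul, ← mul_smul, hc]

/-- The localization of `TwoGen x d` away from `x` is free of rank one. -/
def locEquiv : Loc x d ≃ₗ[A] L :=
  IsLocalizedModule.iso (Submonoid.powers x) (toAway x d L)

lemma locEquiv_toLoc (p : TwoGen x d) : locEquiv x d L (toLoc x d p) = toAway x d L p :=
  IsLocalizedModule.iso_mk_one _ _ p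

/-- The cokernel of the localization map is `L / (A + A · d / x)`. -/
def cokEquiv :
    Cok x d ≃ₗ[A] L ⧸ Submodule.span A (Set.range (algebraMap A L) ∪ {frac x d L}) :=
  Submodule.Quotient.equiv _ _ (locEquiv x d L) <| by
    rw [← range_toAway, ← LinearMap.range_comp]
    exact congrArg LinearMap.range (LinearMap.ext (locEquiv_toLoc x d L))

end

section

variable {A : Type*} [CommRing A] (x d : A)

lemma bijective_smul_toLoc_genb :
    Function.Bijective
      (fun r : Localization (Submonoid.powers x) => r • toLoc x d (genb x d)) := by
  let e := (locEquiv x d (Localization (Submonoid.powers x))).extendScalarsOfIsLocalization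
    (Submonoid.powers x) (Localization (Submonoid.powers x))
  have he : e (toLoc x d (genb x d)) = 1 :=
    (locEquiv_toLoc x d _ _).trans (toAway_genb x d _)
  have hsymm : (fun r => r • toLoc x d (genb x d)) = e.symm := by
    funext r
    rw [LinearEquiv.eq_symm_apply, map_smul, he, smul_eq_mul, mul_one]
  exact hsymm ▸ e.symm.bijective

lemma smul_mk_genb_div_eq_zero :
    d • (Submodule.Quotient.mk
      (LocalizedModule.mk (genb x d) ⟨x, Submonoid.mem_powers x⟩) : Cok x d) = 0 := by
  rw [← Submodule.Quotient.mk_smul, Submodule.Quotient.mk_eq_zero, LocalizedModule.smul'_mk,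
    ← smul_genD]
  exact ⟨genD x d, (LocalizedModule.mk_cancel ⟨x, Submonoid.mem_powers x⟩ (genD x d)).symm⟩

end

end TwoGen

section

variable {R : Type*} [CommRing R] (d : R)

lemma X_dvd_of_X_dvd_C_mul_iff_mem_nonZeroDivisors :
    (∀ f : R[X], Polynomial.X ∣ Polynomial.C d * f → Polynomial.X ∣ f) ↔
      d ∈ nonZeroDivisors R := by
  rw [mem_nonZeroDivisors_iff_left]
  refine ⟨fun h r hr => ?_, fun h f hf => ?_⟩
  · simpa [Polynomial.X_dvd_iff] using h (Polynomial.C r) (by simp [← Polynomial.C_mul, hr])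
  · rw [Polynomial.X_dvd_iff, Polynomial.coeff_C_mul] at hf
    exact Polynomial.X_dvd_iff.2 (h _ hf)

instance : IsScalarTower R R[X] R[T;T⁻¹] :=
  IsScalarTower.of_algebraMap_eq fun r => (Polynomial.toLaurent_C r).symm

/-- The submodule `R[B] + R[B] · d · B⁻¹` of the Laurent polynomials, as an `R[B]`-module. -/
abbrev simplePoleSubmodule : Submodule R[X] R[T;T⁻¹] :=
  Submodule.span R[X]
    (Set.range (Polynomial.toLaurent : R[X] → R[T;T⁻¹]) ∪
      {LaurentPolynomial.C d * LaurentPolynomial.T (-1)})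

lemma frac_X_C_eq :
    TwoGen.frac Polynomial.X (Polynomial.C d) R[T;T⁻¹] =
      LaurentPolynomial.C d * LaurentPolynomial.T (-1) := by
  rw [eq_comm, IsLocalization.eq_mk'_iff_mul_eq,
    LaurentPolynomial.algebraMap_eq_toLaurent, LaurentPolynomial.algebraMap_eq_toLaurent,
    Polynomial.toLaurent_X, Polynomial.toLaurent_C, LaurentPolynomial.mul_T_assoc,
    neg_add_cancel, LaurentPolynomial.T_zero, mul_one]

lemma coeff_toLaurent_of_neg (f : R[X]) {n : ℤ} (hn : n < 0) :
    (Polynomial.toLaurent f).coeff n = 0 := by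
  rw [← Finsupp.notMem_support_iff, LaurentPolynomial.support_coeff_toLaurent]
  simp only [Finset.mem_map, Nat.castEmbedding_apply, not_exists, not_and]
  omega

lemma coeff_smul_C_mul_T_neg_one (f : R[X]) (n : ℤ) :
    (f • (LaurentPolynomial.C d * LaurentPolynomial.T (-1))).coeff n =
      (Polynomial.toLaurent f).coeff (n + 1) * d := by
  rw [← LaurentPolynomial.single_eq_C_mul_T, Algebra.smul_def,
    LaurentPolynomial.algebraMap_eq_toLaurent]
  exact AddMonoidAlgebra.coeff_mul_single_eq_coeff_mul _ fun m _ => by omega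

lemma mem_simplePoleSubmodule_iff_exists (f : R[T;T⁻¹]) :
    f ∈ simplePoleSubmodule d ↔ ∃ p q : R[X], Polynomial.toLaurent p +
      q • (LaurentPolynomial.C d * LaurentPolynomial.T (-1)) = f := by
  have hrange : Set.range (Polynomial.toLaurent : R[X] → R[T;T⁻¹]) =
      LinearMap.range (Algebra.linearMap R[X] R[T;T⁻¹]) := rfl
  rw [simplePoleSubmodule, Submodule.span_union, hrange, Submodule.span_eq]
  simp [Submodule.mem_sup, Submodule.mem_span_singleton]

lemma C_mul_T_mem_simplePoleSubmodule {a : R} {n : ℤ} (hn : n < -1 → a = 0)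
    (ha : n = -1 → d ∣ a) :
    LaurentPolynomial.C a * LaurentPolynomial.T n ∈ simplePoleSubmodule d := by
  rw [mem_simplePoleSubmodule_iff_exists]
  rcases lt_trichotomy n (-1) with hlt | rfl | hgt
  · exact ⟨0, 0, by simp [hn hlt]⟩
  · obtain ⟨c, rfl⟩ := ha rfl
    exact ⟨0, Polynomial.C c, by simp [Algebra.smul_def, mul_assoc, mul_left_comm]⟩
  · lift n to ℕ using by omega
    exact ⟨Polynomial.C a * Polynomial.X ^ n, 0, by simp⟩

lemma mem_simplePoleSubmodule_iff (f : R[T;T⁻¹]) :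
    f ∈ simplePoleSubmodule d ↔ d ∣ f.coeff (-1) ∧ ∀ n < -1, f.coeff n = 0 := by
  constructor
  · rw [mem_simplePoleSubmodule_iff_exists]
    rintro ⟨p, q, rfl⟩
    simp only [AddMonoidAlgebra.coeff_add, Finsupp.add_apply, coeff_smul_C_mul_T_neg_one]
    refine ⟨?_, fun n hn => ?_⟩
    · rw [coeff_toLaurent_of_neg p (by omega), zero_add]
      exact dvd_mul_left d _
    · rw [coeff_toLaurent_of_neg p (by omega), coeff_toLaurent_of_neg q (by omega), zero_mul,
        add_zero]
  · rintro ⟨hresidue, hpole⟩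
    rw [← AddMonoidAlgebra.sum_coeff_single f]
    refine Submodule.sum_mem _ fun n _ => ?_
    rw [LaurentPolynomial.single_eq_C_mul_T]
    exact C_mul_T_mem_simplePoleSubmodule d (hpole n) fun hn => hn ▸ hresidue

lemma neg_natCast_injective {p : ℕ → Prop} :
    Function.Injective fun k : {k // p k} => -(k : ℤ) :=
  fun j k h => Subtype.ext (by simpa using h)

/-- The coefficients of `B⁻ᵏ` for `k ≥ 1`, the one of `B⁻¹` being taken modulo `d`. -/
def principalPart :
    R[T;T⁻¹] →ₗ[R] (R ⧸ Ideal.span {d}) × ({k : ℕ // 2 ≤ k} →₀ R) :=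
  LinearMap.prod
      ((Ideal.span {d}).mkQ ∘ₗ Finsupp.lapply (-1))
      (Finsupp.lcomapDomain (fun k : {k : ℕ // 2 ≤ k} => -(k : ℤ))
        neg_natCast_injective) ∘ₗ
    (AddMonoidAlgebra.coeffLinearEquiv R).toLinearMap

lemma principalPart_fst (f : R[T;T⁻¹]) :
    (principalPart d f).1 = Ideal.Quotient.mk (Ideal.span {d}) (f.coeff (-1)) := rfl

lemma principalPart_snd_apply (f : R[T;T⁻¹]) (k : {k : ℕ // 2 ≤ k}) :
    (principalPart d f).2 k = f.coeff (-(k : ℤ)) := rfl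

lemma ker_principalPart :
    LinearMap.ker (principalPart d) = (simplePoleSubmodule d).restrictScalars R := by
  ext f
  rw [LinearMap.mem_ker, Submodule.restrictScalars_mem, mem_simplePoleSubmodule_iff,
    Prod.ext_iff, Finsupp.ext_iff, principalPart_fst, Prod.fst_zero,
    Ideal.Quotient.eq_zero_iff_dvd]
  simp only [principalPart_snd_apply, Prod.snd_zero, Finsupp.zero_apply]
  refine and_congr_right fun _ => ⟨fun h n hn => ?_, fun h k => h _ (by grind)⟩
  simpa [abs_of_neg (by omega : n < 0)] using h ⟨n.natAbs, by omega⟩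

lemma principalPart_surjective : Function.Surjective (principalPart d) := by
  rintro ⟨y, h⟩
  obtain ⟨a, rfl⟩ := Ideal.Quotient.mk_surjective y
  refine ⟨.single (-1) a +
    .ofCoeff (h.mapDomain fun k : {k : ℕ // 2 ≤ k} => -(k : ℤ)), Prod.ext ?_ (Finsupp.ext ?_)⟩
  · rw [principalPart_fst, AddMonoidAlgebra.coeff_add, Finsupp.add_apply,
      AddMonoidAlgebra.coeff_single, Finsupp.single_eq_same, AddMonoidAlgebra.coeff_ofCoeff,
      Finsupp.mapDomain_of_notMem_range _ _ (by grind), add_zero]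
  · intro k
    rw [principalPart_snd_apply, AddMonoidAlgebra.coeff_add, Finsupp.add_apply,
      AddMonoidAlgebra.coeff_single, Finsupp.single_eq_of_ne (by grind), zero_add,
      AddMonoidAlgebra.coeff_ofCoeff, Finsupp.mapDomain_apply neg_natCast_injective]

/-- The quotient of the Laurent polynomials by `simplePoleSubmodule d` splits over `R` according
to the order of the pole. -/
def quotSimplePoleEquiv :
    (R[T;T⁻¹] ⧸ simplePoleSubmodule d) ≃ₗ[R]
      (R ⧸ Ideal.span {d}) × ({k : ℕ // 2 ≤ k} →₀ R) :=
  (Submodule.Quotient.restrictScalarsEquiv R (simplePoleSubmodule d)).symm ≪≫ₗ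
    Submodule.quotEquivOfEq _ _ (ker_principalPart d).symm ≪≫ₗ
    (principalPart d).quotKerEquivOfSurjective (principalPart_surjective d)

/-- `TwoGen.cokEquiv` for `A = R[B]`, `x = B` and `L = R[B, B⁻¹]`. -/
def cokEquivQuotSimplePole :
    TwoGen.Cok (Polynomial.X : R[X]) (Polynomial.C d) ≃ₗ[R[X]]
      R[T;T⁻¹] ⧸ simplePoleSubmodule d :=
  TwoGen.cokEquiv Polynomial.X (Polynomial.C d) R[T;T⁻¹] ≪≫ₗ
    Submodule.quotEquivOfEq _ _ (by rw [frac_X_C_eq]; rfl)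

theorem Pmod_loc_cok_general :
    (Function.Injective
        (fun p : TwoGen (Polynomial.X : R[X]) (Polynomial.C d) => (Polynomial.X : R[X]) • p) ↔
      d ∈ nonZeroDivisors R) ∧
    Function.Bijective
      (fun r : Localization (Submonoid.powers (Polynomial.X : R[X])) =>
        r • TwoGen.toLoc Polynomial.X (Polynomial.C d)
          (TwoGen.genb Polynomial.X (Polynomial.C d))) ∧
    Nonempty (TwoGen.Cok (Polynomial.X : R[X]) (Polynomial.C d) ≃ₗ[R[X]]
      R[T;T⁻¹] ⧸ simplePoleSubmodule d) ∧
    (Polynomial.C d : R[X]) • (Submodule.Quotient.mk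
        (LocalizedModule.mk (TwoGen.genb Polynomial.X (Polynomial.C d))
          ⟨Polynomial.X, Submonoid.mem_powers _⟩) :
      TwoGen.Cok (Polynomial.X : R[X]) (Polynomial.C d)) = 0 ∧
    letI : Module R (TwoGen.Cok (Polynomial.X : R[X]) (Polynomial.C d)) :=
      Module.compHom _ Polynomial.C
    Nonempty (TwoGen.Cok (Polynomial.X : R[X]) (Polynomial.C d) ≃ₗ[R]
      (R ⧸ Ideal.span {d}) × ({k : ℕ // 2 ≤ k} →₀ R)) :=
  ⟨(TwoGen.smul_injective_iff _ (Polynomial.X_mem_nonzeroDivisors (R := R))).trans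
      (X_dvd_of_X_dvd_C_mul_iff_mem_nonZeroDivisors d),
    TwoGen.bijective_smul_toLoc_genb _ _,
    ⟨cokEquivQuotSimplePole d⟩,
    TwoGen.smul_mk_genb_div_eq_zero _ _,
    letI : Module R (TwoGen.Cok (Polynomial.X : R[X]) (Polynomial.C d)) :=
      Module.compHom _ Polynomial.C
    ⟨compHomEquiv R (cokEquivQuotSimplePole d) ≪≫ₗ quotSimplePoleEquiv d⟩⟩

end

/-- Let `d ≠ 0` in `ℤ₂` and `P = ℤ₂[B]{D, b}/(B·D = d·b)`.  Then `B` acts injectively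
on `P`; the localization `P_B` is free of rank one over `ℤ₂[B,B⁻¹]` on the image of
`b`; and the cokernel of `P → P_B` is `ℤ₂[B,B⁻¹]/(ℤ₂[B] + ℤ₂·d·B⁻¹)`, in which `d`
times the class of `b/B` vanishes; as a `ℤ₂`-module this cokernel is
`(ℤ₂/d) ⊕ ⨁_{k≥2} ℤ₂`. -/
theorem Pmod_loc_cok (d : ℤ_[2]) (hd : d ≠ 0) :
    Function.Injective (fun p : Pmod d => (Polynomial.X : S2) • p) ∧
    Function.Bijective
      (fun r : Localization (Submonoid.powers (Polynomial.X : S2)) =>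
        r • (locMapP d (genb d))) ∧
    Nonempty (PmodCok d ≃ₗ[S2] Wmod d) ∧
    (Polynomial.C d : S2) • (Submodule.Quotient.mk
        (LocalizedModule.mk (genb d) ⟨Polynomial.X, Submonoid.mem_powers _⟩) : PmodCok d) = 0 ∧
    Nonempty (PmodCok d ≃ₗ[ℤ_[2]]
      (ℤ_[2] ⧸ Ideal.span {d}) × ({k : ℕ // 2 ≤ k} →₀ ℤ_[2])) := by
  obtain ⟨hinj, hrest⟩ := Pmod_loc_cok_general d
  exact ⟨hinj.2 (mem_nonZeroDivisors_of_ne_zero hd), hrest⟩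

end
end
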